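/- Let d ≥ 2 and γ ∈ ℝ. For x ∈ ℝ^d with 0 ≤ |x| < 1, ∫_{S^{d-1}} |x-ω|^γ dω = 2π^{d/2} Γ(d/2)^{-1} F(-γ/2, (2-γ-d)/2; d/2; |x|²), and for |x| > 1, ∫_{S^{d-1}} |x-ω|^γ dω = 2π^{d/2} Γ(d/2)^{-1} |x|^γ F(-γ/2, (2-γ-d)/2; d/2; |x|^{-2}). -/

import Mathlib

open Real Set MeasureTheory

/-- Pochhammer symbol (rising factorial) for a real argument. -/
noncomputable def poch (x : ℝ) (n : ℕ) : ℝ := ∏ i ∈ Finset.range n, (x + i)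

/-- Gauss hypergeometric series. -/
noncomputable def hyperF (a b c z : ℝ) : ℝ :=
  ∑' n : ℕ, poch a n * poch b n / (poch c n * (n.factorial : ℝ)) * z ^ n

/-!
For `‖x‖ < 1`, factoring `‖x - ω‖² = (1 + ‖x‖²) (1 - ⟪u, ω⟫)` with `u = 2x / (1 + ‖x‖²)`, where
`‖u‖ < 1`, reduces the potential to a binomial series in `⟪u, ω⟫`. The spherical moments
of `⟪u, ω⟫` come from integrating `⟪u, y⟫ ^ n exp (-‖y‖²)` both in polar coordinates and in an
orthonormal basis containing the direction of `u`. Summing them gives a hypergeometric function of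
`‖u‖² = 4‖x‖² / (1 + ‖x‖²)²`, which Gauss's quadratic transformation turns into one of `‖x‖²`.
Inversion in the unit sphere transfers the result to the exterior.
-/

open Finset.HasAntidiagonal (antidiagonal)

section Pochhammer

lemma poch_zero (x : ℝ) : poch x 0 = 1 := by simp [poch]

lemma poch_succ (x : ℝ) (n : ℕ) : poch x (n + 1) = poch x n * (x + n) := by
  simp [poch, Finset.prod_range_succ]

lemma poch_add (x : ℝ) (m n : ℕ) : poch x (m + n) = poch x m * poch (x + m) n := by
  simp [poch, Finset.prod_range_add, add_assoc]

lemma poch_pos {x : ℝ} (hx : 0 < x) (n : ℕ) : 0 < poch x n :=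
  Finset.prod_pos fun _ _ => by positivity

lemma poch_one (n : ℕ) : poch 1 n = n.factorial := by
  simp [poch, ← Finset.prod_range_add_one_eq_factorial, add_comm]

lemma abs_poch_le (x : ℝ) (n : ℕ) : |poch x n| ≤ poch (|x| + 1) n := by
  rw [poch, Finset.abs_prod]
  refine Finset.prod_le_prod (fun _ _ => abs_nonneg _) fun i _ => ?_
  calc |x + i| ≤ |x| + i := by simpa using abs_add_le x i
    _ ≤ |x| + 1 + i := by linarith

lemma poch_eq_ascPochhammer_eval (x : ℝ) (n : ℕ) : poch x n = (ascPochhammer ℝ n).eval x := by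
  induction n with
  | zero => simp [poch_zero]
  | succ n ih => rw [poch_succ, ih, ascPochhammer_succ_eval]

lemma poch_reflect (x : ℝ) (n : ℕ) : poch (1 - x - n) n = (-1) ^ n * poch x n := by
  rw [poch_eq_ascPochhammer_eval, poch_eq_ascPochhammer_eval, show 1 - x - n = -x - n + 1 by ring,
    ← descPochhammer_eval_eq_ascPochhammer, ← neg_neg x, ascPochhammer_eval_neg_eq_descPochhammer,
    neg_neg, ← mul_assoc, ← mul_pow]
  simp

lemma poch_two_mul (x : ℝ) (n : ℕ) :
    poch x (2 * n) = 4 ^ n * (poch (x / 2) n * poch ((x + 1) / 2) n) := by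
  induction n with
  | zero => simp [poch_zero]
  | succ n ih =>
    rw [show 2 * (n + 1) = 2 * n + 1 + 1 by ring]
    simp only [poch_succ, ih]
    push_cast
    ring

lemma factorial_two_mul (n : ℕ) :
    ((2 * n).factorial : ℝ) = 4 ^ n * (poch (1 / 2) n * n.factorial) := by
  rw [← poch_one, poch_two_mul, ← poch_one n]
  norm_num

lemma Gamma_add_natCast {x : ℝ} (hx : 0 < x) (n : ℕ) : Gamma (x + n) = poch x n * Gamma x := by
  induction n with
  | zero => simp [poch_zero]
  | succ n ih =>
    rw [Nat.cast_succ, ← add_assoc, Gamma_add_one (by positivity), ih, poch_succ]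
    ring

lemma poch_chu_vandermonde (x y : ℝ) (n : ℕ) :
    poch (x + y) n = ∑ p ∈ antidiagonal n, n.choose p.1 * (poch x p.1 * poch y p.2) := by
  have poch_eq (z : ℝ) (m : ℕ) : poch z m = (-1) ^ m * (descPochhammer ℤ m).smeval (-z) := by
    rw [poch_eq_ascPochhammer_eval, ← neg_neg z, ← Polynomial.ascPochhammer_smeval_eq_eval,
      Polynomial.ascPochhammer_smeval_neg_eq_descPochhammer, neg_neg]
    simp [Int.negOnePow, Units.smul_def]
  rw [poch_eq, neg_add, Ring.descPochhammer_smeval_add n (Commute.all _ _), Finset.mul_sum]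
  refine Finset.sum_congr rfl fun p hp => ?_
  rw [poch_eq, poch_eq, ← Finset.HasAntidiagonal.mem_antidiagonal.1 hp, pow_add]
  ring

lemma hasSum_one_sub_rpow_neg (a : ℝ) {y : ℝ} (hy : |y| < 1) :
    HasSum (fun n : ℕ => poch a n / n.factorial * y ^ n) ((1 - y) ^ (-a)) := by
  have coeff_eq (n : ℕ) : Ring.choose (a + n - 1) n = poch a n / n.factorial := by
    rw [← Ring.multichoose_eq, eq_div_iff (by positivity), mul_comm, ← nsmul_eq_mul,
      Ring.factorial_nsmul_multichoose_eq_ascPochhammer, Polynomial.ascPochhammer_smeval_eq_eval,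
      poch_eq_ascPochhammer_eval]
  have h := (one_div_one_sub_rpow_hasFPowerSeriesOnBall_zero a).hasSum (y := y)
    (by simpa [enorm_eq_nnnorm, ← NNReal.coe_lt_coe] using hy)
  have one_sub_nonneg : 0 ≤ 1 - y := by linarith [(abs_lt.1 hy).2]
  simpa only [FormalMultilinearSeries.ofScalars_apply_eq, coeff_eq, zero_add, smul_eq_mul,
    one_div, ← rpow_neg one_sub_nonneg] using h

end Pochhammer

section Hypergeometric

lemma one_le_radius_ordinaryHypergeometricSeries (a b c : ℝ) :
    1 ≤ (ordinaryHypergeometricSeries ℝ a b c).radius := by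
  by_cases h : ∀ k : ℕ, (k : ℝ) ≠ -a ∧ (k : ℝ) ≠ -b ∧ (k : ℝ) ≠ -c
  · rw [ordinaryHypergeometricSeries_radius_eq_one ℝ a b c h]
  · push Not at h
    obtain ⟨k, hk⟩ := h
    suffices (ordinaryHypergeometricSeries ℝ a b c).radius = ⊤ by simp [this]
    obtain ha | hb | hc : a = -k ∨ b = -k ∨ c = -k := by
      grind
    · exact ha ▸ ordinaryHypergeometric_radius_top_of_neg_nat₁ ℝ b c
    · exact hb ▸ ordinaryHypergeometric_radius_top_of_neg_nat₂ ℝ a c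
    · exact hc ▸ ordinaryHypergeometric_radius_top_of_neg_nat₃ ℝ a b

lemma ordinaryHypergeometricSeries_apply_eq_poch (a b c z : ℝ) (n : ℕ) :
    (ordinaryHypergeometricSeries ℝ a b c n fun _ => z) =
      poch a n * poch b n / (poch c n * n.factorial) * z ^ n := by
  simp only [ordinaryHypergeometricSeries_apply_eq, poch_eq_ascPochhammer_eval, smul_eq_mul]
  ring

lemma hyperF_eq_ordinaryHypergeometric (a b c : ℝ) : hyperF a b c = ₂F₁ a b c :=
  funext fun z => tsum_congr fun n => (ordinaryHypergeometricSeries_apply_eq_poch a b c z n).symm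

lemma mem_eball_radius_ordinaryHypergeometricSeries (a b c : ℝ) {z : ℝ} (hz : |z| < 1) :
    z ∈ Metric.eball 0 (ordinaryHypergeometricSeries ℝ a b c).radius := by
  have enorm_lt_one : ‖z‖ₑ < 1 := by simpa [enorm_eq_nnnorm, ← NNReal.coe_lt_coe] using hz
  simpa using enorm_lt_one.trans_le (one_le_radius_ordinaryHypergeometricSeries a b c)

lemma hasSum_hyperF (a b c : ℝ) {z : ℝ} (hz : |z| < 1) :
    HasSum (fun n : ℕ => poch a n * poch b n / (poch c n * n.factorial) * z ^ n)
      (hyperF a b c z) := by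
  rw [hyperF_eq_ordinaryHypergeometric, ordinaryHypergeometric]
  simpa only [ordinaryHypergeometricSeries_apply_eq_poch] using
    FormalMultilinearSeries.hasSum _ (mem_eball_radius_ordinaryHypergeometricSeries a b c hz)

lemma analyticAt_hyperF (a b c : ℝ) {z : ℝ} (hz : |z| < 1) : AnalyticAt ℝ (hyperF a b c) z := by
  rw [hyperF_eq_ordinaryHypergeometric]
  exact (FormalMultilinearSeries.hasFPowerSeriesOnBall _
    (zero_lt_one.trans_le (one_le_radius_ordinaryHypergeometricSeries a b c))).analyticAt_of_mem
    (mem_eball_radius_ordinaryHypergeometricSeries a b c hz)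

end Hypergeometric

section QuadraticTransformation

/-- The general term of the double series in `x, y` obtained by expanding
`(1 - y) ^ (-a) * hyperF (a / 2) ((a + 1) / 2) c (4 * x / (1 - y) ^ 2)` in powers of `y`; for
`y = -x` its antidiagonal sums collapse by the Chu–Vandermonde identity. -/
noncomputable def quadraticTerm (a c x y : ℝ) (p : ℕ × ℕ) : ℝ :=
  poch a (2 * p.1 + p.2) / (p.1.factorial * p.2.factorial * poch c p.1) * (x ^ p.1 * y ^ p.2)

lemma hasSum_quadraticTerm_row (a c x : ℝ) {y : ℝ} (hy : |y| < 1) (k : ℕ) :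
    HasSum (fun j => quadraticTerm a c x y (k, j))
      ((1 - y) ^ (-a) * (poch (a / 2) k * poch ((a + 1) / 2) k / (poch c k * k.factorial) *
        (4 * x / (1 - y) ^ 2) ^ k)) := by
  have one_sub_pos : 0 < 1 - y := by linarith [(abs_lt.1 hy).2]
  have rpow_eq : (1 - y) ^ (-(a + (2 * k : ℕ))) = (1 - y) ^ (-a) / ((1 - y) ^ 2) ^ k := by
    rw [neg_add, rpow_add one_sub_pos, rpow_neg one_sub_pos.le (2 * k : ℕ), rpow_natCast, pow_mul,
      div_eq_mul_inv]
  have term_eq (j : ℕ) : quadraticTerm a c x y (k, j) =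
      poch a (2 * k) / (k.factorial * poch c k) * x ^ k *
        (poch (a + (2 * k : ℕ)) j / j.factorial * y ^ j) := by
    rw [quadraticTerm, poch_add]
    ring
  have sum_eq : (1 - y) ^ (-a) * (poch (a / 2) k * poch ((a + 1) / 2) k /
      (poch c k * k.factorial) * (4 * x / (1 - y) ^ 2) ^ k) =
      poch a (2 * k) / (k.factorial * poch c k) * x ^ k * (1 - y) ^ (-(a + (2 * k : ℕ))) := by
    rw [rpow_eq, poch_two_mul, div_pow, mul_pow]
    ring
  simpa only [term_eq, sum_eq] using (hasSum_one_sub_rpow_neg (a + (2 * k : ℕ)) hy).mul_left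
    (poch a (2 * k) / (k.factorial * poch c k) * x ^ k)

lemma tsum_quadraticTerm {a c x y : ℝ} (hy : |y| < 1) (h : Summable (quadraticTerm a c x y)) :
    ∑' p, quadraticTerm a c x y p =
      (1 - y) ^ (-a) * hyperF (a / 2) ((a + 1) / 2) c (4 * x / (1 - y) ^ 2) := by
  rw [h.tsum_prod' fun k => (hasSum_quadraticTerm_row a c x hy k).summable, hyperF,
    ← tsum_mul_left]
  exact tsum_congr fun k => (hasSum_quadraticTerm_row a c x hy k).tsum_eq

lemma summable_quadraticTerm_of_nonneg {a c x y : ℝ} (ha : 0 < a) (hc : 0 < c) (hx : 0 ≤ x)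
    (hy0 : 0 ≤ y) (hy1 : y < 1) (hxy : 4 * x < (1 - y) ^ 2) :
    Summable (quadraticTerm a c x y) := by
  have abs_y_lt : |y| < 1 := by rwa [abs_of_nonneg hy0]
  have abs_lt_one : |4 * x / (1 - y) ^ 2| < 1 := by
    rwa [abs_of_nonneg (by positivity), div_lt_one (pow_pos (sub_pos.2 hy1) 2)]
  have term_nonneg (p : ℕ × ℕ) : 0 ≤ quadraticTerm a c x y p := by
    have := poch_pos ha (2 * p.1 + p.2)
    have := poch_pos hc p.1
    unfold quadraticTerm
    positivity
  refine (summable_prod_of_nonneg term_nonneg).2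
    ⟨fun k => (hasSum_quadraticTerm_row a c x abs_y_lt k).summable, ?_⟩
  simp only [fun k => (hasSum_quadraticTerm_row a c x abs_y_lt k).tsum_eq]
  exact (hasSum_hyperF _ _ _ abs_lt_one).summable.mul_left _

lemma summable_quadraticTerm (a : ℝ) {c x y : ℝ} (hc : 0 < c) (hy : |y| < 1)
    (hxy : 4 * |x| < (1 - |y|) ^ 2) : Summable (quadraticTerm a c x y) := by
  refine (summable_quadraticTerm_of_nonneg (a := |a| + 1) (by positivity) hc (abs_nonneg x)
    (abs_nonneg y) hy hxy).of_norm_bounded fun p => ?_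
  have := poch_pos hc p.1
  have := abs_poch_le a (2 * p.1 + p.2)
  rw [quadraticTerm, quadraticTerm, norm_eq_abs, abs_mul, abs_div, abs_mul (x ^ p.1), abs_pow,
    abs_pow, abs_of_nonneg (show 0 ≤ p.1.factorial * p.2.factorial * poch c p.1 by positivity)]
  gcongr

lemma sum_antidiagonal_quadraticTerm (a z : ℝ) {c : ℝ} (hc : 0 < c) (n : ℕ) :
    ∑ p ∈ antidiagonal n, quadraticTerm a c z (-z) p =
      poch a n * poch (a + 1 - c) n / (poch c n * n.factorial) * z ^ n := by
  rw [show a + 1 - c = a + n + (1 - c - n) by ring, poch_chu_vandermonde, Finset.mul_sum,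
    Finset.sum_div, Finset.sum_mul]
  refine Finset.sum_congr rfl fun ⟨k, j⟩ hp => ?_
  obtain rfl : k + j = n := Finset.HasAntidiagonal.mem_antidiagonal.1 hp
  have := (poch_pos hc k).ne'
  have := (poch_pos (x := c + k) (by positivity) j).ne'
  have reflect : poch (1 - c - (k + j : ℕ)) j = (-1) ^ j * poch (c + k) j := by
    rw [← poch_reflect]
    push_cast
    ring_nf
  rw [quadraticTerm, reflect, show 2 * k + j = (k + j) + k by ring, poch_add a, poch_add c,
    Nat.cast_add_choose, neg_pow z, pow_add]
  field_simp

lemma tsum_prod_eq_tsum_sum_antidiagonal {A α : Type*} [AddCommMonoid A]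
    [Finset.HasAntidiagonal A] [AddCommMonoid α] [TopologicalSpace α] [ContinuousAdd α] [T3Space α]
    {f : A × A → α} (hf : Summable f) : ∑' p, f p = ∑' n, ∑ p ∈ antidiagonal n, f p := by
  have sigma_summable := Finset.HasAntidiagonal.sigmaAntidiagonalEquivProd.summable_iff.2 hf
  calc ∑' p, f p
      = ∑' q, (f ∘ Finset.HasAntidiagonal.sigmaAntidiagonalEquivProd) q :=
        (Finset.HasAntidiagonal.sigmaAntidiagonalEquivProd.tsum_eq f).symm
    _ = ∑' n, ∑' q : antidiagonal n, f (q : A × A) :=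
        sigma_summable.tsum_sigma' fun n => (hasSum_fintype _).summable
    _ = ∑' n, ∑ p ∈ antidiagonal n, f p := tsum_congr fun n => Finset.tsum_subtype _ f

lemma hyperF_quadratic_transformation_of_small (a : ℝ) {c z : ℝ} (hc : 0 < c) (hz : |z| < 1)
    (hz4 : 4 * |z| < (1 - |z|) ^ 2) :
    (1 + z) ^ (-a) * hyperF (a / 2) ((a + 1) / 2) c (4 * z / (1 + z) ^ 2) =
      hyperF a (a + 1 - c) c z := by
  have summable : Summable (quadraticTerm a c z (-z)) :=
    summable_quadraticTerm a hc (by rwa [abs_neg]) (by rwa [abs_neg])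
  calc (1 + z) ^ (-a) * hyperF (a / 2) ((a + 1) / 2) c (4 * z / (1 + z) ^ 2)
      = ∑' p, quadraticTerm a c z (-z) p := by
        rw [tsum_quadraticTerm (by rwa [abs_neg]) summable, sub_neg_eq_add]
    _ = ∑' n, ∑ p ∈ antidiagonal n, quadraticTerm a c z (-z) p :=
        tsum_prod_eq_tsum_sum_antidiagonal summable
    _ = hyperF a (a + 1 - c) c z :=
        tsum_congr fun n => sum_antidiagonal_quadraticTerm a z hc n

lemma analyticAt_one_add_rpow (s : ℝ) {z : ℝ} (hz : 0 < 1 + z) :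
    AnalyticAt ℝ (fun w : ℝ => (1 + w) ^ s) z := by
  have exp_log : AnalyticAt ℝ (fun w : ℝ => exp (log (1 + w) * s)) z :=
    (((analyticAt_const.add analyticAt_id).log hz).mul analyticAt_const).rexp
  have one_add_pos : ∀ᶠ w : ℝ in nhds z, 0 < 1 + w :=
    continuousAt_const.eventually_lt (by fun_prop) hz
  exact exp_log.congr (one_add_pos.mono fun w hw => (rpow_def_of_pos hw s).symm)

/-- Gauss's quadratic transformation: the identity extends analytically from a neighbourhood of `0`,
where the double series converges absolutely. -/
theorem hyperF_quadratic_transformation (a : ℝ) {c z : ℝ} (hc : 0 < c) (hz : |z| < 1)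
    (hz4 : |4 * z| < (1 + z) ^ 2) :
    (1 + z) ^ (-a) * hyperF (a / 2) ((a + 1) / 2) c (4 * z / (1 + z) ^ 2) =
      hyperF a (a + 1 - c) c z := by
  let S : Set ℝ := {w | |w| < 1 ∧ |4 * w| < (1 + w) ^ 2}
  have preconnected : IsPreconnected S := by
    refine OrdConnected.isPreconnected ⟨fun x hx y hy w hw => ?_⟩
    simp only [S, mem_ofPred_eq, abs_lt] at hx hy ⊢
    obtain ⟨hxw, hwy⟩ := hw
    refine ⟨⟨by linarith, by linarith⟩, ?_, ?_⟩ <;> nlinarith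
  have one_add_pos {w : ℝ} (hw : w ∈ S) : 0 < 1 + w := by linarith [(abs_lt.1 hw.1).1]
  have lhs_analytic : AnalyticOnNhd ℝ (fun w => (1 + w) ^ (-a) *
      hyperF (a / 2) ((a + 1) / 2) c (4 * w / (1 + w) ^ 2)) S := by
    intro w hw
    have sq_pos : 0 < (1 + w) ^ 2 := pow_pos (one_add_pos hw) 2
    refine (analyticAt_one_add_rpow (-a) (one_add_pos hw)).mul (AnalyticAt.fun_comp
      (analyticAt_hyperF _ _ _ ?_) (AnalyticAt.div (by fun_prop) (by fun_prop) sq_pos.ne'))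
    rw [abs_div, abs_of_pos sq_pos, div_lt_one sq_pos]
    exact hw.2
  have rhs_analytic : AnalyticOnNhd ℝ (hyperF a (a + 1 - c) c) S :=
    fun w hw => analyticAt_hyperF _ _ _ hw.1
  refine lhs_analytic.eqOn_of_preconnected_of_eventuallyEq rhs_analytic preconnected (z₀ := 0)
    (by simp [S]) ?_ ⟨hz, hz4⟩
  have near_zero : ∀ᶠ w : ℝ in nhds 0, |w| < 1 ∧ 4 * |w| < (1 - |w|) ^ 2 := by
    exact (ContinuousAt.eventually_lt (by fun_prop) (by fun_prop) (by simp)).and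
      (ContinuousAt.eventually_lt (by fun_prop) (by fun_prop) (by simp))
  filter_upwards [near_zero] with w hw
  exact hyperF_quadratic_transformation_of_small a hc hw.1 hw.2

end QuadraticTransformation

section Gaussian

lemma integral_Ioi_pow_mul_exp_neg_sq (n : ℕ) :
    ∫ t in Ioi (0 : ℝ), t ^ n * exp (-t ^ 2) = Gamma ((n + 1) / 2) / 2 := by
  have h := integral_rpow_mul_exp_neg_rpow (p := 2) (q := n) two_pos
    (by linarith [Nat.cast_nonneg (α := ℝ) n])
  simp only [rpow_natCast, rpow_two] at h
  rw [h]
  ring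

lemma integral_even_pow_mul_exp_neg_sq (k : ℕ) :
    ∫ t : ℝ, t ^ (2 * k) * exp (-t ^ 2) = poch (1 / 2) k * √π := by
  have h := integral_comp_abs (f := fun t : ℝ => t ^ (2 * k) * exp (-t ^ 2))
  simp only [sq_abs, (even_two_mul k).pow_abs, integral_Ioi_pow_mul_exp_neg_sq] at h
  rw [h, ← Gamma_one_half_eq, ← Gamma_add_natCast one_half_pos]
  push_cast
  ring_nf

lemma integral_odd_pow_mul_exp_neg_sq (k : ℕ) :
    ∫ t : ℝ, t ^ (2 * k + 1) * exp (-t ^ 2) = 0 := by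
  have h := integral_neg_eq_self (fun t : ℝ => t ^ (2 * k + 1) * exp (-t ^ 2)) volume
  simp only [(odd_two_mul_add_one k).neg_pow, neg_sq, neg_mul, integral_neg] at h
  linarith

lemma integral_exp_neg_sq : ∫ t : ℝ, exp (-t ^ 2) = √π := by
  simpa using integral_gaussian 1

end Gaussian

section PolarCoordinates

lemma integral_volumeIoiPow (n : ℕ) (f : ℝ → ℝ) :
    ∫ r : Ioi (0 : ℝ), f r ∂(Measure.volumeIoiPow n) = ∫ r in Ioi (0 : ℝ), r ^ n * f r := by
  simp only [Measure.volumeIoiPow, ENNReal.ofReal]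
  rw [integral_withDensity_eq_integral_smul (measurable_subtype_coe.pow_const _).real_toNNReal,
    integral_subtype_comap measurableSet_Ioi fun r : ℝ => (r ^ n).toNNReal • f r]
  refine setIntegral_congr_fun measurableSet_Ioi fun r hr => ?_
  simp only [NNReal.smul_def, coe_toNNReal _ (pow_nonneg (le_of_lt hr) n), smul_eq_mul]

lemma integral_homogeneous_mul_norm {E : Type*} [NormedAddCommGroup E] [NormedSpace ℝ E]
    [FiniteDimensional ℝ E] [Nontrivial E] [MeasurableSpace E] [BorelSpace E] (μ : Measure E)
    [μ.IsAddHaarMeasure] {g : E → ℝ} {n : ℕ} (hg : ∀ r : ℝ, 0 < r → ∀ y, g (r • y) = r ^ n * g y)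
    (φ : ℝ → ℝ) :
    ∫ y, g y * φ ‖y‖ ∂μ = (∫ ω : Metric.sphere (0 : E) 1, g ω ∂μ.toSphere) *
      ∫ r in Ioi (0 : ℝ), r ^ (Module.finrank ℝ E - 1) * (r ^ n * φ r) :=
  calc ∫ y, g y * φ ‖y‖ ∂μ
      = ∫ y : ({0}ᶜ : Set E), g y * φ ‖(y : E)‖ ∂(μ.comap (↑)) := by
        rw [integral_subtype_comap (measurableSet_singleton _).compl fun y : E => g y * φ ‖y‖,
          restrict_compl_singleton]
    _ = ∫ p, g p.1 * ((p.2 : ℝ) ^ n * φ p.2)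
          ∂μ.toSphere.prod (.volumeIoiPow (Module.finrank ℝ E - 1)) := by
        rw [← μ.measurePreserving_homeomorphUnitSphereProd.integral_comp
          (Homeomorph.measurableEmbedding _)]
        refine integral_congr_ae (.of_forall fun y => ?_)
        have norm_pos : 0 < ‖(y : E)‖ := norm_pos_iff.2 y.2
        simp only [homeomorphUnitSphereProd_apply_snd_coe, homeomorphUnitSphereProd_apply_fst_coe,
          hg _ (inv_pos.2 norm_pos), inv_pow]
        field_simp
    _ = _ := by
        rw [integral_prod_mul (fun ω : Metric.sphere (0 : E) 1 => g ω)
          (fun r : Ioi (0 : ℝ) => (r : ℝ) ^ n * φ r), integral_volumeIoiPow _ fun r => r ^ n * φ r]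

end PolarCoordinates

section UnitSphere

variable {E : Type*} [NormedAddCommGroup E] [InnerProductSpace ℝ E]

lemma abs_inner_sphere_le (u : E) (ω : Metric.sphere (0 : E) 1) : |inner ℝ u (ω : E)| ≤ ‖u‖ := by
  simpa using abs_real_inner_le_norm u (ω : E)

lemma norm_sub_rpow_eq (γ : ℝ) (x : E) (ω : Metric.sphere (0 : E) 1) :
    ‖x - ω‖ ^ γ = (1 + ‖x‖ ^ 2) ^ (γ / 2) *
      (1 - inner ℝ ((2 / (1 + ‖x‖ ^ 2)) • x) (ω : E)) ^ (γ / 2) := by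
  have norm_sq : ‖x - ω‖ ^ 2 =
      (1 + ‖x‖ ^ 2) * (1 - inner ℝ ((2 / (1 + ‖x‖ ^ 2)) • x) (ω : E)) := by
    rw [norm_sub_sq_real, real_inner_smul_left, norm_eq_of_mem_sphere ω]
    field_simp
    ring
  have factor_nonneg : 0 ≤ 1 - inner ℝ ((2 / (1 + ‖x‖ ^ 2)) • x) (ω : E) :=
    nonneg_of_mul_nonneg_right (norm_sq ▸ sq_nonneg _) (by positivity)
  rw [← mul_rpow (by positivity) factor_nonneg, ← norm_sq, ← rpow_two,
    ← rpow_mul (norm_nonneg _), mul_div_cancel₀ _ two_ne_zero]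

lemma norm_sub_eq_norm_mul_norm_inversion_sub {x : E} (hx : x ≠ 0) (ω : Metric.sphere (0 : E) 1) :
    ‖x - ω‖ = ‖x‖ * ‖EuclideanGeometry.inversion 0 1 x - ω‖ := by
  have h := EuclideanGeometry.dist_inversion_mul_dist_center_eq (R := 1) hx
    (ne_zero_of_mem_unit_sphere ω)
  rw [EuclideanGeometry.inversion_of_mem_sphere ω.2, dist_zero_right, dist_zero_right,
    norm_eq_of_mem_sphere ω, mul_one, dist_eq_norm, dist_eq_norm] at h
  rw [← h, mul_comm]

end UnitSphere

section SpherePotential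

variable {E : Type*} [NormedAddCommGroup E] [InnerProductSpace ℝ E] [FiniteDimensional ℝ E]
  [MeasurableSpace E] [BorelSpace E]

lemma integral_prod_inner_orthonormalBasis {ι : Type*} [Fintype ι] (b : OrthonormalBasis ι ℝ E)
    (f : ι → ℝ → ℝ) : ∫ y, ∏ i, f i (inner ℝ (b i) y) = ∏ i, ∫ t, f i t := by
  have repr_preserving : MeasurePreserving (b.measurableEquiv.trans
      (MeasurableEquiv.toLp 2 (ι → ℝ)).symm) :=
    (EuclideanSpace.volume_preserving_symm_measurableEquiv_toLp ι).comp
      b.measurePreserving_measurableEquiv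
  rw [← integral_fintype_prod_volume_eq_prod, ← repr_preserving.integral_comp']
  simp [OrthonormalBasis.measurableEquiv, ← OrthonormalBasis.repr_apply_apply]

lemma integral_inner_mul_exp_neg_norm_sq {e : E} (he : ‖e‖ = 1) (f : ℝ → ℝ) :
    ∫ y, f (inner ℝ e y) * exp (-‖y‖ ^ 2) =
      (∫ t, f t * exp (-t ^ 2)) * √π ^ (Module.finrank ℝ E - 1) := by
  classical
  have orthonormal_e : Orthonormal ℝ ((↑) : ({e} : Set E) → E) :=
    orthonormal_subsingleton_iff.2 fun i => by rw [i.2, he]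
  obtain ⟨u, b, e_mem, hb⟩ := orthonormal_e.exists_orthonormalBasis_extension
  obtain ⟨i₀, hi₀⟩ : ∃ i, b i = e := ⟨⟨e, e_mem rfl⟩, by rw [hb]⟩
  let F (i : u) (t : ℝ) : ℝ := (if i = i₀ then f t else 1) * exp (-t ^ 2)
  have integrand_eq (y : E) : f (inner ℝ e y) * exp (-‖y‖ ^ 2) = ∏ i, F i (inner ℝ (b i) y) := by
    have norm_sq : ‖y‖ ^ 2 = ∑ i, inner ℝ (b i) y ^ 2 := by
      simpa using (b.sum_sq_norm_inner_right y).symm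
    rw [Finset.prod_mul_distrib, Fintype.prod_ite_eq', ← exp_sum, Finset.sum_neg_distrib,
      norm_sq, hi₀]
  have integral_of_ne {i : u} (hi : i ∈ Finset.univ.erase i₀) : ∫ t, F i t = √π := by
    simp only [F, if_neg (Finset.ne_of_mem_erase hi), one_mul, integral_exp_neg_sq]
  rw [integral_congr_ae (.of_forall integrand_eq), integral_prod_inner_orthonormalBasis,
    ← Finset.mul_prod_erase _ _ (Finset.mem_univ i₀), Finset.prod_congr rfl fun _ => integral_of_ne,
    Finset.prod_const, Finset.card_erase_of_mem (Finset.mem_univ i₀), Finset.card_univ,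
    Module.finrank_eq_card_basis b.toBasis]
  simp only [F, if_true]

lemma hasSum_integral_toSphere_one_sub_inner_rpow (a : ℝ) {u : E} (hu : ‖u‖ < 1) :
    HasSum (fun n : ℕ => poch a n / n.factorial *
        ∫ ω : Metric.sphere (0 : E) 1, inner ℝ u (ω : E) ^ n ∂volume.toSphere)
      (∫ ω : Metric.sphere (0 : E) 1, (1 - inner ℝ u (ω : E)) ^ (-a) ∂volume.toSphere) := by
  simp only [← integral_const_mul]
  refine hasSum_integral_of_dominated_convergence
    (fun n _ => |poch a n / n.factorial * ‖u‖ ^ n|)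
    (fun n => Continuous.aestronglyMeasurable (by fun_prop))
    (fun n => .of_forall fun ω => ?_)
    (.of_forall fun _ => (hasSum_one_sub_rpow_neg a (by rwa [abs_norm])).summable.abs)
    (integrable_const _)
    (.of_forall fun ω => hasSum_one_sub_rpow_neg a ((abs_inner_sphere_le u ω).trans_lt hu))
  rw [norm_eq_abs, abs_mul, abs_mul, abs_pow, abs_pow, abs_norm]
  gcongr
  exact abs_inner_sphere_le u ω

variable [Nontrivial E]

lemma toSphere_real_univ : (volume : Measure E).toSphere.real univ =
    2 * π ^ ((Module.finrank ℝ E : ℝ) / 2) / Gamma ((Module.finrank ℝ E : ℝ) / 2) := by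
  have finrank_pos : 0 < (Module.finrank ℝ E : ℝ) := Nat.cast_pos.2 Module.finrank_pos
  rw [Measure.toSphere_real_apply_univ, Measure.real, InnerProductSpace.volume_ball,
    Gamma_add_one (half_pos finrank_pos).ne', sqrt_eq_rpow, ← rpow_natCast, ← rpow_mul pi_nonneg]
  have := Gamma_pos_of_pos (half_pos finrank_pos)
  rw [ENNReal.ofReal_one, one_pow, one_mul, ENNReal.toReal_ofReal (by positivity)]
  field_simp

lemma integral_toSphere_inner_pow_mul_Gamma (u : E) (n : ℕ) :
    (∫ ω : Metric.sphere (0 : E) 1, inner ℝ u (ω : E) ^ n ∂volume.toSphere) *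
        (Gamma ((n + Module.finrank ℝ E) / 2) / 2) =
      ‖u‖ ^ n * ((∫ t : ℝ, t ^ n * exp (-t ^ 2)) * √π ^ (Module.finrank ℝ E - 1)) := by
  obtain ⟨e, he, hu⟩ : ∃ e : E, ‖e‖ = 1 ∧ u = ‖u‖ • e := by
    obtain rfl | hu := eq_or_ne u 0
    · obtain ⟨e, he⟩ := exists_norm_eq E zero_le_one
      exact ⟨e, he, by simp⟩
    · exact ⟨‖u‖⁻¹ • u, by simp [norm_smul, hu], by simp [hu]⟩
  have finrank_pos : 0 < Module.finrank ℝ E := Module.finrank_pos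
  have radial : ∫ r in Ioi (0 : ℝ), r ^ (Module.finrank ℝ E - 1) * (r ^ n * exp (-r ^ 2)) =
      Gamma ((n + Module.finrank ℝ E) / 2) / 2 := by
    simp only [← mul_assoc, ← pow_add, integral_Ioi_pow_mul_exp_neg_sq]
    push_cast [finrank_pos]
    ring_nf
  have homogeneous (r : ℝ) (_ : 0 < r) (y : E) :
      inner ℝ e (r • y) ^ n = r ^ n * inner ℝ e y ^ n := by
    rw [real_inner_smul_right, mul_pow]
  have inner_pow (y : E) : inner ℝ u y ^ n = ‖u‖ ^ n * inner ℝ e y ^ n := by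
    rw [hu, real_inner_smul_left, mul_pow, ← hu]
  simp only [inner_pow, integral_const_mul]
  rw [mul_assoc, ← radial,
    ← integral_homogeneous_mul_norm (g := fun y => inner ℝ e y ^ n) volume homogeneous
      fun r => exp (-r ^ 2),
    integral_inner_mul_exp_neg_norm_sq he (· ^ n)]

lemma integral_toSphere_inner_even_pow (u : E) (k : ℕ) :
    ∫ ω : Metric.sphere (0 : E) 1, inner ℝ u (ω : E) ^ (2 * k) ∂volume.toSphere =
      (volume : Measure E).toSphere.real univ *
        (poch (1 / 2) k / poch ((Module.finrank ℝ E : ℝ) / 2) k * ‖u‖ ^ (2 * k)) := by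
  have half_finrank_pos : 0 < (Module.finrank ℝ E : ℝ) / 2 :=
    half_pos (Nat.cast_pos.2 Module.finrank_pos)
  have := Gamma_pos_of_pos half_finrank_pos
  have := poch_pos half_finrank_pos k
  have area := integral_toSphere_inner_pow_mul_Gamma u 0
  have moment := integral_toSphere_inner_pow_mul_Gamma u (2 * k)
  simp only [pow_zero, integral_const, smul_eq_mul, mul_one, one_mul, integral_exp_neg_sq,
    Nat.cast_zero, zero_add] at area
  rw [integral_even_pow_mul_exp_neg_sq, mul_assoc (poch _ _), ← area, Nat.cast_mul, Nat.cast_two,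
    add_div, mul_div_cancel_left₀ _ two_ne_zero, add_comm, Gamma_add_natCast half_finrank_pos]
    at moment
  field_simp at moment ⊢
  linarith

lemma integral_toSphere_inner_odd_pow (u : E) (k : ℕ) :
    ∫ ω : Metric.sphere (0 : E) 1, inner ℝ u (ω : E) ^ (2 * k + 1) ∂volume.toSphere = 0 := by
  have h := integral_toSphere_inner_pow_mul_Gamma u (2 * k + 1)
  have Gamma_pos : 0 < Gamma (((2 * k + 1 : ℕ) + Module.finrank ℝ E : ℝ) / 2) :=
    Gamma_pos_of_pos (by positivity)
  rw [integral_odd_pow_mul_exp_neg_sq, zero_mul, mul_zero] at h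
  exact (mul_eq_zero.1 h).resolve_right (by positivity)

lemma integral_toSphere_one_sub_inner_rpow (a : ℝ) {u : E} (hu : ‖u‖ < 1) :
    ∫ ω : Metric.sphere (0 : E) 1, (1 - inner ℝ u (ω : E)) ^ (-a) ∂volume.toSphere =
      (volume : Measure E).toSphere.real univ *
        hyperF (a / 2) ((a + 1) / 2) ((Module.finrank ℝ E : ℝ) / 2) (‖u‖ ^ 2) := by
  have moments := hasSum_integral_toSphere_one_sub_inner_rpow a hu
  have odd_terms_eq_zero (n : ℕ) (hn : n ∉ range fun k : ℕ => 2 * k) : poch a n / n.factorial *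
      ∫ ω : Metric.sphere (0 : E) 1, inner ℝ u (ω : E) ^ n ∂volume.toSphere = 0 := by
    obtain ⟨k, rfl | rfl⟩ := n.even_or_odd'
    · exact absurd (mem_range_self k) hn
    · rw [integral_toSphere_inner_odd_pow, mul_zero]
  rw [← (mul_right_injective₀ two_ne_zero).hasSum_iff odd_terms_eq_zero] at moments
  have abs_sq_lt : |‖u‖ ^ 2| < 1 := by
    rw [abs_pow, abs_norm]
    exact pow_lt_one₀ (norm_nonneg u) hu two_ne_zero
  refine moments.unique (((hasSum_hyperF _ _ _ abs_sq_lt).mul_left _).congr_fun fun k => ?_)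
  have := poch_pos one_half_pos k
  rw [Function.comp_apply, integral_toSphere_inner_even_pow, poch_two_mul, factorial_two_mul,
    pow_mul ‖u‖]
  field_simp

lemma integral_toSphere_norm_sub_rpow_of_norm_lt_one (γ : ℝ) {x : E} (hx : ‖x‖ < 1) :
    ∫ ω : Metric.sphere (0 : E) 1, ‖x - ω‖ ^ γ ∂volume.toSphere =
      (volume : Measure E).toSphere.real univ * hyperF (-γ / 2) ((2 - γ - Module.finrank ℝ E) / 2)
        ((Module.finrank ℝ E : ℝ) / 2) (‖x‖ ^ 2) := by
  have half_finrank_pos : 0 < (Module.finrank ℝ E : ℝ) / 2 :=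
    half_pos (Nat.cast_pos.2 Module.finrank_pos)
  let u : E := (2 / (1 + ‖x‖ ^ 2)) • x
  have norm_u_sq : ‖u‖ ^ 2 = 4 * ‖x‖ ^ 2 / (1 + ‖x‖ ^ 2) ^ 2 := by
    rw [norm_smul, mul_pow, norm_eq_abs, sq_abs, div_pow]
    ring
  have norm_sq_lt : ‖x‖ ^ 2 < 1 := pow_lt_one₀ (norm_nonneg x) hx two_ne_zero
  have four_mul_lt : 4 * ‖x‖ ^ 2 < (1 + ‖x‖ ^ 2) ^ 2 := by
    nlinarith [sq_pos_of_pos (sub_pos.2 norm_sq_lt)]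
  have norm_u_lt : ‖u‖ < 1 := by
    rw [← sq_lt_one_iff₀ (norm_nonneg u), norm_u_sq, div_lt_one (by positivity)]
    exact four_mul_lt
  have transformation := hyperF_quadratic_transformation (-γ / 2) half_finrank_pos
    (z := ‖x‖ ^ 2) (by rwa [abs_of_nonneg (by positivity)])
    (by rwa [abs_of_nonneg (by positivity)])
  rw [show -γ / 2 + 1 - (Module.finrank ℝ E : ℝ) / 2 = (2 - γ - Module.finrank ℝ E) / 2 by ring]
    at transformation
  simp only [norm_sub_rpow_eq γ x, integral_const_mul]
  rw [show γ / 2 = -(-γ / 2) by ring, integral_toSphere_one_sub_inner_rpow (-γ / 2) norm_u_lt,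
    mul_left_comm, norm_u_sq, transformation]

theorem sphere_potential_hyper_general (γ : ℝ) (x : E) :
    (‖x‖ < 1 →
      ∫ ω : Metric.sphere (0 : E) 1, ‖x - ω‖ ^ γ ∂volume.toSphere =
        2 * π ^ ((Module.finrank ℝ E : ℝ) / 2) / Gamma ((Module.finrank ℝ E : ℝ) / 2) *
          hyperF (-γ / 2) ((2 - γ - Module.finrank ℝ E) / 2) ((Module.finrank ℝ E : ℝ) / 2)
            (‖x‖ ^ 2)) ∧
    (1 < ‖x‖ →
      ∫ ω : Metric.sphere (0 : E) 1, ‖x - ω‖ ^ γ ∂volume.toSphere =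
        2 * π ^ ((Module.finrank ℝ E : ℝ) / 2) / Gamma ((Module.finrank ℝ E : ℝ) / 2) * ‖x‖ ^ γ *
          hyperF (-γ / 2) ((2 - γ - Module.finrank ℝ E) / 2) ((Module.finrank ℝ E : ℝ) / 2)
            (‖x‖ ^ 2)⁻¹) := by
  rw [← toSphere_real_univ]
  refine ⟨integral_toSphere_norm_sub_rpow_of_norm_lt_one γ, fun hx => ?_⟩
  have x_ne_zero : x ≠ 0 := norm_pos_iff.1 (zero_lt_one.trans hx)
  have norm_inversion : ‖EuclideanGeometry.inversion 0 1 x‖ = ‖x‖⁻¹ := by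
    simpa using EuclideanGeometry.dist_inversion_center 0 x 1
  have norm_inversion_lt : ‖EuclideanGeometry.inversion 0 1 x‖ < 1 :=
    norm_inversion ▸ inv_lt_one_of_one_lt₀ hx
  simp only [norm_sub_eq_norm_mul_norm_inversion_sub x_ne_zero,
    mul_rpow (norm_nonneg _) (norm_nonneg _), integral_const_mul]
  rw [integral_toSphere_norm_sub_rpow_of_norm_lt_one γ norm_inversion_lt, norm_inversion, inv_pow]
  ring

end SpherePotential

theorem sphere_potential_hyper (d : ℕ) (hd : 2 ≤ d) (γ : ℝ)
    (x : EuclideanSpace ℝ (Fin d)) :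
    (‖x‖ < 1 →
      ∫ ω : Metric.sphere (0 : EuclideanSpace ℝ (Fin d)) 1,
          ‖x - (ω : EuclideanSpace ℝ (Fin d))‖ ^ γ ∂(volume.toSphere) =
        2 * Real.pi ^ ((d : ℝ) / 2) / Real.Gamma ((d : ℝ) / 2) *
          hyperF (-γ / 2) ((2 - γ - (d : ℝ)) / 2) ((d : ℝ) / 2) (‖x‖ ^ 2)) ∧
    (1 < ‖x‖ →
      ∫ ω : Metric.sphere (0 : EuclideanSpace ℝ (Fin d)) 1,
          ‖x - (ω : EuclideanSpace ℝ (Fin d))‖ ^ γ ∂(volume.toSphere) =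
        2 * Real.pi ^ ((d : ℝ) / 2) / Real.Gamma ((d : ℝ) / 2) * ‖x‖ ^ γ *
          hyperF (-γ / 2) ((2 - γ - (d : ℝ)) / 2) ((d : ℝ) / 2) (‖x‖ ^ 2)⁻¹) := by
  have : Nontrivial (Fin d) := Fin.nontrivial_iff_two_le.2 hd
  simpa only [finrank_euclideanSpace_fin] using sphere_potential_hyper_general γ x
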